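/- Define G_L : ℝ → ℝ by G_L(θ) = √(16(3 − 2cos θ − cos 2θ)/(27 + 20cos θ + cos 2θ)). Then, as θ → 0, G_L(θ) = θ − θ⁵/2880 + O(θ⁷); that is, the function θ ↦ G_L(θ) − θ + θ⁵/2880 is O(θ⁷) in a neighborhood of 0, so the absolute phase error of Lobatto-integrated C¹ quadratic isogeometric analysis is (1/5!)·θ⁵/24 + O(θ⁷) in magnitude and of opposite sign to that of the Gauss-integrated scheme. -/

import Mathlib

open Real Filter Asymptotics Topology

/-!
With the stiffness and mass symbols `K` and `M` normalized so that `K(θ) ~ θ²` and `M(0) = 1`, the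
discrete eigenvalue is `K / M`, and Taylor expansion of the cosines gives
`K(θ) = θ² - θ⁴/4 + 11θ⁶/360 + O(θ⁸)` and `M(θ) = 1 - θ²/4 + θ⁴/32 + O(θ⁶)`. The terms of order
`θ⁴` in `K` and `θ² M` cancel, while those of order `θ⁶` leave the defect `11/360 - 1/32 = -1/1440`,
so `K / M = θ² - θ⁶/1440 + O(θ⁸)`. Up to `O(θ⁸)` this is the square of `|θ| - |θ|⁵/2880`, and
taking square roots costs one order because `√f - g = (f - g²) / (√f + g)` with `g ~ |θ|`.
-/

lemma re_sum_range_mul_I_pow_div_factorial (x : ℝ) (n : ℕ) :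
    (∑ m ∈ Finset.range (2 * n), (x * Complex.I) ^ m / (m.factorial : ℂ)).re =
      ∑ k ∈ Finset.range n, (-1) ^ k * x ^ (2 * k) / (2 * k).factorial := by
  induction n with
  | zero => simp
  | succ n ih =>
    have even_term : (x * Complex.I) ^ (2 * n) / ((2 * n).factorial : ℂ) =
        (((-1) ^ n * x ^ (2 * n) / (2 * n).factorial : ℝ) : ℂ) := by
      rw [mul_pow, pow_mul Complex.I, Complex.I_sq]
      push_cast
      ring
    have odd_term : (x * Complex.I) ^ (2 * n + 1) / ((2 * n + 1).factorial : ℂ) =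
        (((-1) ^ n * x ^ (2 * n + 1) / (2 * n + 1).factorial : ℝ) : ℂ) * Complex.I := by
      rw [mul_pow, pow_succ Complex.I, pow_mul Complex.I, Complex.I_sq]
      push_cast
      ring
    rw [mul_add_one, Finset.sum_range_succ, Finset.sum_range_succ, Finset.sum_range_succ,
      Complex.add_re, Complex.add_re, ih, even_term, odd_term, Complex.ofReal_re,
      Complex.re_ofReal_mul, Complex.I_re, mul_zero, add_zero]

lemma cos_sub_sum_range_isBigO_pow (n : ℕ) :
    (fun x : ℝ => cos x - ∑ k ∈ Finset.range n, (-1) ^ k * x ^ (2 * k) / (2 * k).factorial)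
      =O[𝓝 0] fun x => x ^ (2 * n) := by
  have mul_I_tendsto : Tendsto (fun x : ℝ => x * Complex.I) (𝓝 0) (𝓝 0) :=
    Continuous.tendsto' (by fun_prop) _ _ (by simp)
  have exp_expansion := (Complex.exp_sub_sum_range_isBigO_pow (2 * n)).comp_tendsto mul_I_tendsto
  refine (isBigO_of_le _ fun x => ?_).trans (exp_expansion.trans (isBigO_of_le _ fun x => ?_))
  · rw [← re_sum_range_mul_I_pow_div_factorial, ← Complex.exp_ofReal_mul_I_re, ← Complex.sub_re]
    exact Complex.abs_re_le_norm _
  · simp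

lemma cos_const_mul_sub_sum_range_isBigO_pow (a : ℝ) (n : ℕ) :
    (fun x : ℝ => cos (a * x) -
        ∑ k ∈ Finset.range n, (-1) ^ k * (a * x) ^ (2 * k) / (2 * k).factorial)
      =O[𝓝 0] fun x => x ^ (2 * n) := by
  have const_mul_tendsto : Tendsto (fun x : ℝ => a * x) (𝓝 0) (𝓝 0) :=
    Continuous.tendsto' (by fun_prop) _ _ (mul_zero a)
  exact ((cos_sub_sum_range_isBigO_pow n).comp_tendsto const_mul_tendsto).trans
    (((isBigO_refl _ _).const_mul_left a).pow (2 * n))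

lemma isBigO_div_sub {α 𝕜 : Type*} [NormedField 𝕜] {l : Filter α} {u v w h : α → 𝕜} {c : 𝕜}
    (hv : Tendsto v l (𝓝 c)) (hc : c ≠ 0) (huv : (fun x => u x - w x * v x) =O[l] h) :
    (fun x => u x / v x - w x) =O[l] h := by
  have quotient_eq : (fun x => (v x)⁻¹ * (u x - w x * v x)) =ᶠ[l] fun x => u x / v x - w x := by
    filter_upwards [hv.eventually_ne hc] with x hx
    field_simp
  simpa using (((hv.inv₀ hc).isBigO_one 𝕜).mul huv).congr' quotient_eq .rfl

lemma abs_sqrt_sub_mul_le (a : ℝ) {b : ℝ} (hb : 0 ≤ b) : |√a - b| * b ≤ |a - b ^ 2| := by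
  rcases le_total 0 a with ha | ha
  · calc |√a - b| * b ≤ |√a - b| * (√a + b) := by gcongr; linarith [sqrt_nonneg a]
      _ = |(√a - b) * (√a + b)| := by rw [abs_mul, abs_of_nonneg (add_nonneg (sqrt_nonneg a) hb)]
      _ = |a - b ^ 2| := by congr 1; linear_combination sq_sqrt ha
  · rw [sqrt_eq_zero_of_nonpos ha, zero_sub, abs_neg, abs_of_nonneg hb, abs_sub_comm]
    exact le_trans (by linarith) (le_abs_self _)

lemma isBigO_sqrt_sub {α : Type*} {l : Filter α} {f g h : α → ℝ} (hg : ∀ᶠ x in l, 0 ≤ g x)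
    (hfg : (fun x => f x - g x ^ 2) =O[l] fun x => h x * g x) :
    (fun x => √(f x) - g x) =O[l] h := by
  obtain ⟨C, hC, hbound⟩ := hfg.exists_nonneg
  refine .of_bound C ?_
  filter_upwards [hg, hbound.bound] with x hgx hx
  rw [norm_mul, norm_eq_abs (g x), abs_of_nonneg hgx] at hx
  rcases hgx.eq_or_lt with hzero | hpos
  · have hf : f x = 0 := by simpa [← hzero] using hx
    simpa [hf, ← hzero] using mul_nonneg hC (abs_nonneg (h x))
  · refine le_of_mul_le_mul_right ?_ hpos
    calc ‖√(f x) - g x‖ * g x ≤ |f x - g x ^ 2| := abs_sqrt_sub_mul_le _ hgx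
      _ ≤ C * ‖h x‖ * g x := by rw [mul_assoc]; exact hx

/-- The symbol `h · ∑ⱼ Kⱼ e^{ijθ}` of the exact stiffness stencil
`(1/(6h)) (-1, -2, 6, -2, -1)` of `C¹` quadratic B-splines. -/
noncomputable def stiffnessSymbol (θ : ℝ) : ℝ := (3 - 2 * cos θ - cos (2 * θ)) / 3

/-- The symbol `h⁻¹ · ∑ⱼ Mⱼ e^{ijθ}` of the mass stencil of `C¹` quadratic B-splines integrated by
the 3-point Lobatto rule. -/
noncomputable def lobattoMassSymbol (θ : ℝ) : ℝ := (27 + 20 * cos θ + cos (2 * θ)) / 48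

/-- The normalized discrete eigenvalue `(ωʰh)²` of the Fourier mode of wavenumber `θ = kh`. -/
noncomputable def lobattoEigenvalue (θ : ℝ) : ℝ := stiffnessSymbol θ / lobattoMassSymbol θ

lemma lobattoEigenvalue_eq (θ : ℝ) :
    lobattoEigenvalue θ =
      16 * (3 - 2 * cos θ - cos (2 * θ)) / (27 + 20 * cos θ + cos (2 * θ)) := by
  rw [lobattoEigenvalue, stiffnessSymbol, lobattoMassSymbol, div_div_div_eq, mul_comm _ (48 : ℝ),
    show (48 : ℝ) = 3 * 16 by norm_num, mul_assoc, mul_div_mul_left _ _ three_ne_zero]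

lemma stiffnessSymbol_sub_isBigO :
    (fun θ => stiffnessSymbol θ - (θ ^ 2 - θ ^ 4 / 4 + 11 * θ ^ 6 / 360))
      =O[𝓝 0] fun θ => θ ^ 8 := by
  have cos_expansion := (cos_sub_sum_range_isBigO_pow 4).const_mul_left (-2 / 3)
  have cos_two_mul_expansion :=
    (cos_const_mul_sub_sum_range_isBigO_pow 2 4).const_mul_left (-1 / 3)
  refine (cos_expansion.add cos_two_mul_expansion).congr_left fun θ => ?_
  simp only [stiffnessSymbol, Finset.sum_range_succ, Finset.sum_range_zero, Nat.factorial]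
  push_cast
  ring

lemma lobattoMassSymbol_sub_isBigO :
    (fun θ => lobattoMassSymbol θ - (1 - θ ^ 2 / 4 + θ ^ 4 / 32)) =O[𝓝 0] fun θ => θ ^ 6 := by
  have cos_expansion := (cos_sub_sum_range_isBigO_pow 3).const_mul_left (20 / 48)
  have cos_two_mul_expansion :=
    (cos_const_mul_sub_sum_range_isBigO_pow 2 3).const_mul_left (1 / 48)
  refine (cos_expansion.add cos_two_mul_expansion).congr_left fun θ => ?_
  simp only [lobattoMassSymbol, Finset.sum_range_succ, Finset.sum_range_zero, Nat.factorial]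
  push_cast
  ring

lemma lobattoMassSymbol_sub_one_isBigO :
    (fun θ => lobattoMassSymbol θ - 1) =O[𝓝 0] fun θ => θ ^ 2 := by
  have cos_expansion := (cos_sub_sum_range_isBigO_pow 1).const_mul_left (20 / 48)
  have cos_two_mul_expansion :=
    (cos_const_mul_sub_sum_range_isBigO_pow 2 1).const_mul_left (1 / 48)
  refine (cos_expansion.add cos_two_mul_expansion).congr_left fun θ => ?_
  simp only [lobattoMassSymbol, Finset.sum_range_one, Nat.factorial]
  push_cast
  ring

lemma tendsto_lobattoMassSymbol : Tendsto lobattoMassSymbol (𝓝 0) (𝓝 1) :=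
  Continuous.tendsto' (by unfold lobattoMassSymbol; fun_prop) _ _
    (by norm_num [lobattoMassSymbol])

lemma stiffnessSymbol_sub_mul_lobattoMassSymbol_isBigO :
    (fun θ => stiffnessSymbol θ - (θ ^ 2 - θ ^ 6 / 1440) * lobattoMassSymbol θ)
      =O[𝓝 0] fun θ => θ ^ 8 := by
  have mass_remainder := ((isBigO_refl (fun θ : ℝ => θ ^ 2) (𝓝 0)).mul
    lobattoMassSymbol_sub_isBigO).congr_right (g₂ := fun θ => θ ^ 8) fun θ => by ring
  have mass_defect := (((isBigO_refl (fun θ : ℝ => θ ^ 6) (𝓝 0)).mul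
    lobattoMassSymbol_sub_one_isBigO).congr_right (g₂ := fun θ => θ ^ 8) fun θ => by ring)
    |>.const_mul_left (1 / 1440)
  refine ((stiffnessSymbol_sub_isBigO.sub mass_remainder).add mass_defect).congr_left fun θ => ?_
  ring

lemma lobattoEigenvalue_sub_isBigO :
    (fun θ => lobattoEigenvalue θ - (θ ^ 2 - θ ^ 6 / 1440))
      =O[𝓝 0] fun θ => θ ^ 8 :=
  isBigO_div_sub tendsto_lobattoMassSymbol one_ne_zero
    stiffnessSymbol_sub_mul_lobattoMassSymbol_isBigO

lemma eventually_abs_le_two_mul_abs_sub_pow :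
    ∀ᶠ θ : ℝ in 𝓝 0, |θ| ≤ 2 * (|θ| - |θ| ^ 5 / 2880) := by
  filter_upwards [Metric.closedBall_mem_nhds (0 : ℝ) one_pos] with θ hθ
  have pow_le : |θ| ^ 5 ≤ |θ| :=
    pow_le_of_le_one (abs_nonneg θ) (by simpa using hθ) (by norm_num)
  linarith [abs_nonneg θ]

lemma lobattoEigenvalue_sub_sq_isBigO :
    (fun θ => lobattoEigenvalue θ - (|θ| - |θ| ^ 5 / 2880) ^ 2)
      =O[𝓝 0] fun θ => θ ^ 8 := by
  have tenth_order : (fun θ : ℝ => θ ^ 10) =O[𝓝 0] fun θ => θ ^ 8 :=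
    (isLittleO_pow_pow (by norm_num)).isBigO
  refine (lobattoEigenvalue_sub_isBigO.sub
    (tenth_order.const_mul_left (1 / 2880 ^ 2))).congr_left fun θ => ?_
  have sq_expansion : (|θ| - |θ| ^ 5 / 2880) ^ 2 =
      θ ^ 2 - θ ^ 6 / 1440 + θ ^ 10 / 2880 ^ 2 := by
    calc (|θ| - |θ| ^ 5 / 2880) ^ 2
        = |θ| ^ 2 - (|θ| ^ 2) ^ 3 / 1440 + (|θ| ^ 2) ^ 5 / 2880 ^ 2 := by ring
      _ = θ ^ 2 - θ ^ 6 / 1440 + θ ^ 10 / 2880 ^ 2 := by rw [sq_abs]; ring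
  rw [sq_expansion]
  ring

theorem iga_quadratic_lobatto_dispersion_expansion_general :
    (fun θ : ℝ =>
        √(16 * (3 - 2 * cos θ - cos (2 * θ)) / (27 + 20 * cos θ + cos (2 * θ)))
          - |θ| + |θ| ^ 5 / 2880)
      =O[𝓝 0] fun θ : ℝ => θ ^ 7 := by
  have expansion_nonneg : ∀ᶠ θ : ℝ in 𝓝 0, 0 ≤ |θ| - |θ| ^ 5 / 2880 := by
    filter_upwards [eventually_abs_le_two_mul_abs_sub_pow] with θ hθ
    linarith [abs_nonneg θ]
  have id_isBigO : (fun θ : ℝ => θ) =O[𝓝 0] fun θ => |θ| - |θ| ^ 5 / 2880 := by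
    refine .of_bound 2 ?_
    filter_upwards [eventually_abs_le_two_mul_abs_sub_pow] with θ hθ
    exact hθ.trans (by gcongr; exact le_abs_self _)
  have pow_isBigO : (fun θ : ℝ => θ ^ 8) =O[𝓝 0] fun θ => θ ^ 7 * (|θ| - |θ| ^ 5 / 2880) :=
    ((isBigO_refl _ _).mul id_isBigO).congr_left fun θ => (pow_succ θ 7).symm
  refine (isBigO_sqrt_sub expansion_nonneg
    (lobattoEigenvalue_sub_sq_isBigO.trans pow_isBigO)).congr_left fun θ => ?_
  rw [lobattoEigenvalue_eq, sub_add]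

/-- Dispersion expansion for Lobatto-integrated `C¹` quadratic isogeometric
analysis: the discrete frequency function
`G_L(θ) = √(16(3 − 2cos θ − cos 2θ)/(27 + 20cos θ + cos 2θ))` satisfies
`G_L(θ) = θ − θ⁵/2880 + O(θ⁷)` as `θ → 0`, i.e. its absolute phase error is
`(1/5!)·θ⁵/24 + O(θ⁷)`, of opposite sign to the Gauss-integrated scheme. -/
theorem iga_quadratic_lobatto_dispersion_expansion :
    (fun θ : ℝ =>
        Real.sqrt (16 * (3 - 2 * Real.cos θ - Real.cos (2 * θ))
            / (27 + 20 * Real.cos θ + Real.cos (2 * θ)))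
          - θ + θ ^ 5 / 2880)
      =O[𝓝[>] (0 : ℝ)] fun θ : ℝ => θ ^ 7 := by
  refine (iga_quadratic_lobatto_dispersion_expansion_general.mono nhdsWithin_le_nhds).congr' ?_ .rfl
  filter_upwards [self_mem_nhdsWithin] with θ hθ
  rw [abs_of_pos hθ]
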